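/- arXiv:1412.7952 — 2 statements merged into one kernel-verified Lean document; each statement's English description precedes it below -/
import Mathlib

section
/- Let Q be a d×d real generator matrix (off-diagonal entries nonnegative, each row summing to zero) and let π ∈ ℝ^d be an invariant probability vector for Q, i.e., π has nonnegative entries summing to 1 and πᵀQ = 0. Then the matrix Qᵀ diag{π} + diag{π} Q is symmetric and nonpositive definite (i.e., xᵀ(Qᵀ diag{π} + diag{π} Q)x ≤ 0 for every x ∈ ℝ^d). -/
/-!
The quadratic form of `Qᵀ diag{π} + diag{π} Q` is the negative of a Dirichlet form:
expanding the square `(x i - x j) ^ 2`, the terms `π i * Q i j * x i ^ 2` sum to zero because the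
rows of `Q` do, and the terms `π i * Q i j * x j ^ 2` sum to zero because `π` is invariant. Hence
the form at `x` equals `-∑ i, ∑ j, π i * Q i j * (x i - x j) ^ 2`, in which the diagonal terms
vanish and the off-diagonal weights are nonnegative.
-/

open Matrix

/-- For a generator matrix `Q` with invariant probability vector `π`, the
matrix `Qᵀ diag{π} + diag{π} Q` is symmetric and nonpositive definite. -/
theorem stmt3 {d : ℕ} (Q : Matrix (Fin d) (Fin d) ℝ)
    (hQoff : ∀ i j, i ≠ j → 0 ≤ Q i j)
    (hQrow : ∀ i, ∑ j, Q i j = 0)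
    (π : Fin d → ℝ) (hπ0 : ∀ i, 0 ≤ π i) (hπ1 : ∑ i, π i = 1)
    (hπQ : Matrix.vecMul π Q = 0) :
    (Q.transpose * Matrix.diagonal π + Matrix.diagonal π * Q).IsSymm ∧
    ∀ x : Fin d → ℝ,
      x ⬝ᵥ (Q.transpose * Matrix.diagonal π + Matrix.diagonal π * Q).mulVec x ≤ 0 := by
  refine ⟨?_, fun x => ?_⟩
  · simp [Matrix.IsSymm, Matrix.transpose_add, Matrix.transpose_mul, add_comm]
  have hcol : ∀ j, ∑ i, π i * Q i j = 0 := fun j => congrFun hπQ j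
  have h1 : ∑ i, ∑ j, π i * Q i j * x i ^ 2 = 0 := by
    refine Finset.sum_eq_zero fun i _ => ?_
    rw [← Finset.sum_mul, ← Finset.mul_sum, hQrow, mul_zero, zero_mul]
  have h2 : ∑ i, ∑ j, π i * Q i j * x j ^ 2 = 0 := by
    rw [Finset.sum_comm]
    refine Finset.sum_eq_zero fun j _ => ?_
    rw [← Finset.sum_mul, hcol, zero_mul]
  have h3 : 0 ≤ ∑ i, ∑ j, π i * Q i j * (x i - x j) ^ 2 := by
    refine Finset.sum_nonneg fun i _ => Finset.sum_nonneg fun j _ => ?_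
    by_cases hij : i = j
    · simp [hij]
    · exact mul_nonneg (mul_nonneg (hπ0 i) (hQoff i j hij)) (sq_nonneg _)
  have h4 : ∑ i, ∑ j, π i * Q i j * (x i - x j) ^ 2 =
      ∑ i, ∑ j, π i * Q i j * x i ^ 2 + ∑ i, ∑ j, π i * Q i j * x j ^ 2
        - 2 * ∑ i, ∑ j, π i * Q i j * (x i * x j) := by
    simp only [Finset.mul_sum, ← Finset.sum_add_distrib, ← Finset.sum_sub_distrib]
    exact Finset.sum_congr rfl fun i _ => Finset.sum_congr rfl fun j _ => by ring
  have h5 : x ⬝ᵥ (diagonal π * Q) *ᵥ x = ∑ i, ∑ j, π i * Q i j * (x i * x j) := by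
    simp only [dotProduct, mulVec, diagonal_mul, Finset.mul_sum]
    exact Finset.sum_congr rfl fun i _ => Finset.sum_congr rfl fun j _ => by ring
  have h6 : x ⬝ᵥ (Qᵀ * diagonal π) *ᵥ x = ∑ i, ∑ j, π i * Q i j * (x i * x j) := by
    simp only [dotProduct, mulVec, mul_diagonal, transpose_apply, Finset.mul_sum]
    rw [Finset.sum_comm]
    exact Finset.sum_congr rfl fun i _ => Finset.sum_congr rfl fun j _ => by ring
  rw [add_mulVec, dotProduct_add, h5, h6]
  linarith
end

section
/- Let m₀, α₁, α₂, σ₁, σ₂, q₂ ∈ ℝ and γ₁, γ₂ > 0. Define g : [0,∞) × ℝ → ℝ by g(t, θ) := exp( −θ m₀ e^{−γ₂ t} − q₂ t − (α₂/γ₂)(θ − θ e^{−γ₂ t}) + (σ₂²/(4γ₂))(θ² − θ² e^{−2γ₂ t}) ), and define g₁ : [0,∞) × ℝ → ℝ by g₁(t, θ) := q₂ exp( −(α₁/γ₁)θ + (σ₁²/(4γ₁))θ² ) ∫₀^t g(s, θ e^{−γ₁(t−s)}) exp( (α₁/γ₁) θ e^{−γ₁(t−s)} − (σ₁²/(4γ₁))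 θ² e^{−2γ₁(t−s)} ) ds. Then g₁ satisfies the non-homogeneous partial differential equation ∂g₁/∂t (t, θ) + θ γ₁ · ∂g₁/∂θ (t, θ) = ( −θ α₁ + (1/2) θ² σ₁² ) g₁(t, θ) + q₂ g(t, θ) for all t ≥ 0 and θ ∈ ℝ, together with the initial condition g₁(0, θ) = 0. -/
/-!
The substitution `y = θ e^{-γ₁ t}` straightens the characteristics of the operator
`∂ₜ + γ₁ θ ∂_θ`: the integrand of `g₁` at `s` depends on `(t, θ)` only through `y`, so that
`g₁(t, θ) = q₂ E(θ) I(t, θ e^{-γ₁ t})` with `I(t, y) = ∫₀ᵗ F(s, y) ds` for a smooth `F`, and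
`E(θ) = exp(-(α₁/γ₁) θ + (σ₁²/(4γ₁)) θ²)`. The function `I` is jointly differentiable because its
partial derivatives `F(t, y)` and `∫₀ᵗ ∂_y F(s, y) ds` are continuous
(`hasFDerivAt_parametric_primitive`). By the chain rule the `∂_y I` contributions cancel in
`∂ₜ + γ₁ θ ∂_θ` (`hasDerivAt_along_characteristics`). What remains is `q₂ E F`, which equals
`q₂ g`, and `γ₁ θ E'(θ) q₂ I`, which equals `(-θ α₁ + θ² σ₁² / 2) g₁`.
-/

open MeasureTheory Filter Topology in
/-- Differentiation under the integral sign, with the `C¹` hypothesis supplying the local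
domination by compactness. -/
lemma hasDerivAt_parametric_integral {F : ℝ → ℝ → ℝ} (hF : ContDiff ℝ 1 (Function.uncurry F))
    (t y : ℝ) :
    HasDerivAt (fun y => ∫ s in (0:ℝ)..t, F s y)
      (∫ s in (0:ℝ)..t, fderiv ℝ (Function.uncurry F) (s, y) (0, 1)) y := by
  have hF0 : Continuous (Function.uncurry F) := hF.continuous
  have hF' : Continuous (fun p : ℝ × ℝ => fderiv ℝ (Function.uncurry F) p (0, 1)) :=
    (hF.continuous_fderiv one_ne_zero).clm_apply continuous_const
  have hslice : ∀ y, Continuous (fun s => F s y) := fun y =>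
    hF0.comp (by fun_prop : Continuous fun s : ℝ => (s, y))
  obtain ⟨C, hC⟩ := ((isCompact_uIcc (a := (0:ℝ)) (b := t)).prod
    (isCompact_closedBall y 1)).exists_bound_of_continuousOn hF'.continuousOn
  refine (intervalIntegral.hasDerivAt_integral_of_dominated_loc_of_deriv_le
    (F := fun y s => F s y) (F' := fun y s => fderiv ℝ (Function.uncurry F) (s, y) (0, 1))
    (bound := fun _ => C) (s := Metric.closedBall y 1)
    (Metric.closedBall_mem_nhds y one_pos) ?_ ?_ ?_ ?_ ?_ ?_).2
  · exact Eventually.of_forall fun y => (hslice y).aestronglyMeasurable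
  · exact (hslice y).intervalIntegrable _ _
  · exact (hF'.comp (by fun_prop : Continuous fun s : ℝ => (s, y))).aestronglyMeasurable
  · exact Eventually.of_forall fun s hs x hx => hC (s, x) ⟨Set.uIoc_subset_uIcc hs, hx⟩
  · exact intervalIntegrable_const
  · refine Eventually.of_forall fun s _ x _ => ?_
    have h1 := (hF.differentiable one_ne_zero (s, x)).hasFDerivAt
    have h2 : HasDerivAt (fun x : ℝ => (s, x)) ((0:ℝ), (1:ℝ)) x :=
      (hasDerivAt_const x s).prodMk (hasDerivAt_id x)
    exact h1.comp_hasDerivAt x h2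

open Filter Topology in
/-- Joint differentiability of `(t, y) ↦ ∫₀ᵗ F(s, y) ds`, from the continuity of its partial
derivatives. -/
lemma hasFDerivAt_parametric_primitive {F : ℝ → ℝ → ℝ}
    (hF : ContDiff ℝ 1 (Function.uncurry F)) (t y : ℝ) :
    HasFDerivAt (fun p : ℝ × ℝ => ∫ s in (0:ℝ)..p.1, F s p.2)
      ((ContinuousLinearMap.toSpanSingleton ℝ (F t y)).coprod
        (ContinuousLinearMap.toSpanSingleton ℝ
          (∫ s in (0:ℝ)..t, fderiv ℝ (Function.uncurry F) (s, y) (0, 1)))) (t, y) := by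
  have hF0 : Continuous (Function.uncurry F) := hF.continuous
  have hF' : Continuous (fun p : ℝ × ℝ => fderiv ℝ (Function.uncurry F) p (0, 1)) :=
    (hF.continuous_fderiv one_ne_zero).clm_apply continuous_const
  have hspan : Continuous fun c : ℝ => ContinuousLinearMap.toSpanSingleton ℝ c :=
    (ContinuousLinearMap.toSpanSingletonCLE (𝕜 := ℝ) (E := ℝ)).continuous
  refine (hasStrictFDerivAt_uncurry_coprod (𝕜 := ℝ) (u := (t, y))
    (f := fun t y => ∫ s in (0:ℝ)..t, F s y)
    (f₁ := fun t y => ContinuousLinearMap.toSpanSingleton ℝ (F t y))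
    (f₂ := fun t y => ContinuousLinearMap.toSpanSingleton ℝ
      (∫ s in (0:ℝ)..t, fderiv ℝ (Function.uncurry F) (s, y) (0, 1)))
    ?_ ?_ ?_ ?_).hasFDerivAt
  · refine Eventually.of_forall fun v => ?_
    have hc : Continuous (fun s => F s v.2) :=
      hF0.comp (by fun_prop : Continuous fun s : ℝ => (s, v.2))
    exact (hc.integral_hasStrictDerivAt 0 v.1).hasDerivAt.hasFDerivAt
  · exact Eventually.of_forall fun v => (hasDerivAt_parametric_integral hF v.1 v.2).hasFDerivAt
  · exact (hspan.comp hF0).continuousAt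
  · refine (hspan.comp ?_).continuousAt
    exact intervalIntegral.continuous_parametric_intervalIntegral_of_continuous
      (f := fun (p : ℝ × ℝ) s => fderiv ℝ (Function.uncurry F) (s, p.2) (0, 1))
      (hF'.comp (by fun_prop : Continuous fun q : (ℝ × ℝ) × ℝ => (q.2, q.1.2))) continuous_fst

/-- The `t`- and `θ`-derivatives of `∫₀ᵗ F(s, θ e^{-γ t}) ds`, expressed through the same number
`D = ∂_y ∫₀ᵗ F(s, y) ds`, which drops out of the combination `∂ₜ + γ θ ∂_θ`. -/
lemma hasDerivAt_along_characteristics {F : ℝ → ℝ → ℝ}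
    (hF : ContDiff ℝ 1 (Function.uncurry F)) (γ t θ : ℝ) :
    ∃ D : ℝ,
      HasDerivAt (fun t' => ∫ s in (0:ℝ)..t', F s (θ * Real.exp (-γ * t')))
        (F t (θ * Real.exp (-γ * t)) - γ * θ * Real.exp (-γ * t) * D) t ∧
      HasDerivAt (fun θ' => ∫ s in (0:ℝ)..t, F s (θ' * Real.exp (-γ * t)))
        (Real.exp (-γ * t) * D) θ := by
  refine ⟨∫ s in (0:ℝ)..t,
    fderiv ℝ (Function.uncurry F) (s, θ * Real.exp (-γ * t)) (0, 1), ?_, ?_⟩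
  · have hexp : HasDerivAt (fun t' => θ * Real.exp (-γ * t'))
        (θ * (Real.exp (-γ * t) * (-γ * 1))) t :=
      (((hasDerivAt_id t).const_mul (-γ)).exp).const_mul θ
    have h := (hasFDerivAt_parametric_primitive hF t (θ * Real.exp (-γ * t))).comp_hasDerivAt t
      ((hasDerivAt_id t).prodMk hexp)
    refine h.congr_deriv ?_
    simp
    ring
  · have h := (hasDerivAt_parametric_integral hF t (θ * Real.exp (-γ * t))).comp θ
      ((hasDerivAt_id θ).mul_const (Real.exp (-γ * t)))
    refine h.congr_deriv ?_
    ring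


/-- With `g` as in Statement 16 and
`g₁(t, θ) = q₂ exp(−(α₁/γ₁)θ + (σ₁²/(4γ₁))θ²)
  ∫₀^t g(s, θe^{−γ₁(t−s)}) exp((α₁/γ₁)θe^{−γ₁(t−s)} − (σ₁²/(4γ₁))θ²e^{−2γ₁(t−s)}) ds`,
`g₁` satisfies the non-homogeneous PDE
`∂g₁/∂t + θγ₁ ∂g₁/∂θ = (−θα₁ + θ²σ₁²/2) g₁ + q₂ g` for `t ≥ 0`, `θ ∈ ℝ`, with
`g₁(0, θ) = 0`. -/
theorem stmt17 (m₀ α₁ α₂ σ₁ σ₂ q₂ : ℝ) (γ₁ γ₂ : ℝ) (hγ₁ : 0 < γ₁) (hγ₂ : 0 < γ₂)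
    (g : ℝ → ℝ → ℝ)
    (hg : ∀ t θ : ℝ, g t θ =
      Real.exp (-θ * m₀ * Real.exp (-γ₂ * t) - q₂ * t
        - (α₂ / γ₂) * (θ - θ * Real.exp (-γ₂ * t))
        + (σ₂ ^ 2 / (4 * γ₂)) * (θ ^ 2 - θ ^ 2 * Real.exp (-2 * γ₂ * t))))
    (g₁ : ℝ → ℝ → ℝ)
    (hg₁ : ∀ t θ : ℝ, g₁ t θ =
      q₂ * Real.exp (-(α₁ / γ₁) * θ + (σ₁ ^ 2 / (4 * γ₁)) * θ ^ 2) *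
        ∫ s in (0:ℝ)..t,
          g s (θ * Real.exp (-γ₁ * (t - s))) *
            Real.exp ((α₁ / γ₁) * θ * Real.exp (-γ₁ * (t - s))
              - (σ₁ ^ 2 / (4 * γ₁)) * θ ^ 2 * Real.exp (-2 * γ₁ * (t - s)))) :
    (∀ t θ : ℝ, 0 ≤ t →
      deriv (fun t' => g₁ t' θ) t + θ * γ₁ * deriv (fun θ' => g₁ t θ') θ
        = (-θ * α₁ + (1 / 2) * θ ^ 2 * σ₁ ^ 2) * g₁ t θ + q₂ * g t θ) ∧
    ∀ θ : ℝ, g₁ 0 θ = 0 := by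
  refine ⟨fun t θ _ => ?_, fun θ => by simp [hg₁]⟩
  -- The integrand in the variables `s` and `y = θ e^{-γ₁ t}`, i.e. `θ e^{-γ₁ (t - s)} = y e^{γ₁ s}`.
  let F : ℝ → ℝ → ℝ := fun s y =>
    g s (y * Real.exp (γ₁ * s)) *
      Real.exp ((α₁ / γ₁) * (y * Real.exp (γ₁ * s))
        - (σ₁ ^ 2 / (4 * γ₁)) * (y * Real.exp (γ₁ * s)) ^ 2)
  have hF : ContDiff ℝ 1 (Function.uncurry F) := by
    simp only [F, hg, Function.uncurry_def]
    fun_prop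
  let E : ℝ → ℝ := fun θ => Real.exp (-(α₁ / γ₁) * θ + (σ₁ ^ 2 / (4 * γ₁)) * θ ^ 2)
  have hshift : ∀ t s θ : ℝ,
      θ * Real.exp (-γ₁ * t) * Real.exp (γ₁ * s) = θ * Real.exp (-γ₁ * (t - s)) := by
    intro t s θ
    rw [mul_assoc, ← Real.exp_add]
    ring_nf
  have hg₁F : ∀ t θ : ℝ, g₁ t θ =
      q₂ * E θ * ∫ s in (0:ℝ)..t, F s (θ * Real.exp (-γ₁ * t)) := by
    intro t θ
    rw [hg₁]
    congr 1
    refine intervalIntegral.integral_congr fun s _ => ?_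
    have hsq : Real.exp (-2 * γ₁ * (t - s)) = Real.exp (-γ₁ * (t - s)) ^ 2 := by
      rw [← Real.exp_nat_mul]
      push_cast
      ring_nf
    simp only [F, hshift, hsq]
    ring_nf
  have hE : HasDerivAt E (E θ * (-(α₁ / γ₁) * 1 + (σ₁ ^ 2 / (4 * γ₁)) * (2 * θ))) θ := by
    have h := (((hasDerivAt_id θ).const_mul (-(α₁ / γ₁))).add
      ((hasDerivAt_pow 2 θ).const_mul (σ₁ ^ 2 / (4 * γ₁)))).exp
    refine h.congr_deriv ?_
    simp [E]
  -- At `s = t` the factor `E` cancels against the exponential in the integrand.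
  have hEF : E θ * F t (θ * Real.exp (-γ₁ * t)) = g t θ := by
    simp only [E, F, hshift, sub_self, mul_zero, Real.exp_zero, mul_one]
    rw [mul_left_comm, ← Real.exp_add]
    ring_nf
    simp
  obtain ⟨D, ht, hθ⟩ := hasDerivAt_along_characteristics hF γ₁ t θ
  have h1 := (ht.const_mul (q₂ * E θ)).deriv
  have h2 := ((hE.const_mul q₂).mul hθ).deriv
  have e1 : (fun t' => g₁ t' θ) = fun t' =>
      q₂ * E θ * ∫ s in (0:ℝ)..t', F s (θ * Real.exp (-γ₁ * t')) := funext fun t' => hg₁F t' θ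
  have e2 : (fun θ' => g₁ t θ') = (fun θ' => q₂ * E θ') * fun θ' =>
      ∫ s in (0:ℝ)..t, F s (θ' * Real.exp (-γ₁ * t)) := funext fun θ' => hg₁F t θ'
  rw [e1, e2, h1, h2, hg₁F, ← hEF]
  field_simp
  ring
end
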